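/- Let Ω ⊆ ℝⁿ be an open domain, let M, P, Q satisfy conditions (M) and (Y), and let μ satisfy condition (μ). Assume the Hardy-type inequality (H1): there are constants K₁, K₂, A > 0 such that ∫_Ω P(|∇φ|·|u|) dμ ≤ K₁·∫_Ω P(A·|∇u|) dμ + K₂·∫_Ω M(|u|) dμ for every u ∈ C₀^∞(Ω). Then there exist constants L, B > 0 such that for every θ ∈ (0,1] and every u ∈ C₀^∞(Ω): ∫_Ω M(|∇u|) dμ ≤ L·∫_Ω P(θ·|∇⁽²⁾u|) dμ + ∫_Ω Q((B/θ)·|u|) dμ. -/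

import Mathlib

/-!
The proof is an integration by parts. Write `m(λ) = M(λ)/λ²` and let `w = m(|∇u|) ∇u`, with `w = 0`
where `∇u = 0`. Then `M(|∇u|) = ∇u · w`, so that
`∫ M(|∇u|) dμ = ∑ᵢ ∫ ∂ᵢu (wᵢ e^{-φ}) dx = -∑ᵢ ∫ u (∂ᵢwᵢ - wᵢ ∂ᵢφ) dμ`.

*Regularity.* Convexity and the Δ₂-condition give the difference estimate
`|m(|p|)p - m(|q|)q| ≤ (c + 1) m(max(|p|,|q|)) |p - q|` (`field_sub_le`). As `M'(λ)/λ` is bounded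
near zero, `m` is bounded on bounded intervals (`ratio_bound`), so `w` is Lipschitz. It has
compact support in `Ω`, where `e^{-φ}` is locally Lipschitz, hence `wᵢ e^{-φ}` is globally
Lipschitz (`lipschitz_mul_cutoff`) and integration by parts for Lipschitz functions
(`LipschitzWith.integral_lineDeriv_mul_eq`) applies.

*Pointwise bounds.* Fix a large `k`. At almost every point the Young-type inequality (Y) gives
* `k |u| |∂ᵢwᵢ| ≤ M(|∇u|) + P(θ|∇⁽²⁾u|) + Q(k(c+1)|u|/θ)`. It is applied to difference quotients,
  using `field_sub_le` before passing to the limit (`deriv_young`); this avoids any chain rule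
  for `w` and covers the points where `∇u = 0`.
* `k |u| |wᵢ| |∂ᵢφ| ≤ M(|∇u|) + P(ε|∇u||∇φ|) + Q(k|u|/ε)`.

*Hardy inequality.* Since `|∇u| ≤ (n+1) |∂ⱼu|` for some `j`, monotonicity of `P` bounds
`P(ε|∇u||∇φ|)` by `∑ⱼ P(|∇φ| |vⱼ|)` with `vⱼ = (n+1)ε ∂ⱼu` (`P_norm_le_sum`). The Hardy-type
inequality applies to the test functions `vⱼ`. With `ε = θ/((n+1)(A+1))` one has `|vⱼ| ≤ |∇u|` and
`A|∇vⱼ| ≤ θ|∇⁽²⁾u|`. Altogether `k I ≤ n (2I + J + n(K₁J + K₂I) + 2T)`, where `I`, `J`, `T` are the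
integrals of `M(|∇u|)`, `P(θ|∇⁽²⁾u|)` and `Q(B|u|/θ)`. All of them are finite, so for `k` large the
terms in `I` on the right are absorbed and the coefficient of `T` becomes at most `1`.
-/

open MeasureTheory Filter Set

noncomputable section

/-- `E n` is the Euclidean space `ℝⁿ`. -/
abbrev E (n : ℕ) := EuclideanSpace ℝ (Fin n)

/-- An `N`-function: a continuous convex function `M : [0,∞) → [0,∞)` with `M(0) = 0`,
`lim_{λ→0} M(λ)/λ = 0` and `lim_{λ→∞} λ/M(λ) = 0`. -/
def IsNFunction (M : ℝ → ℝ) : Prop :=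
  ContinuousOn M (Ici 0) ∧ ConvexOn ℝ (Ici 0) M ∧ M 0 = 0 ∧
  (∀ x ≥ (0:ℝ), 0 ≤ M x) ∧
  Tendsto (fun l => M l / l) (nhdsWithin 0 (Ioi 0)) (nhds 0) ∧
  Tendsto (fun l => l / M l) atTop (nhds 0)

/-- The Δ₂-condition. -/
def Delta2 (M : ℝ → ℝ) : Prop := ∃ c > 0, ∀ l > (0:ℝ), M (2 * l) ≤ c * M l

/-- Condition (M): `M` is an `N`-function of class `C¹` on `(0,∞)` satisfying the
Δ₂-condition and such that `M'(λ)/λ` is bounded near zero. -/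
def CondM (M : ℝ → ℝ) : Prop :=
  IsNFunction M ∧ ContDiffOn ℝ 1 M (Ioi 0) ∧ Delta2 M ∧
  ∃ ε > (0:ℝ), ∃ C : ℝ, ∀ l ∈ Ioo (0:ℝ) ε, deriv M l / l ≤ C

/-- Condition (Y): `P, Q` are nonnegative nondecreasing measurable functions vanishing at `0`
such that the Young-type inequality `(M(u)/u²)·v·w ≤ M(u) + P(v) + Q(w)` holds. -/
def CondY (M P Q : ℝ → ℝ) : Prop :=
  Measurable P ∧ Measurable Q ∧ (∀ x ≥ (0:ℝ), 0 ≤ P x) ∧ (∀ x ≥ (0:ℝ), 0 ≤ Q x) ∧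
  MonotoneOn P (Ici 0) ∧ MonotoneOn Q (Ici 0) ∧ P 0 = 0 ∧ Q 0 = 0 ∧
  ∀ u > (0:ℝ), ∀ v > (0:ℝ), ∀ w > (0:ℝ), M u / u ^ 2 * v * w ≤ M u + P v + Q w

/-- `φ` is locally Lipschitz on `Ω`. -/
def LocLipschitzOn {α : Type*} [MetricSpace α] (Ω : Set α) (φ : α → ℝ) : Prop :=
  ∀ x ∈ Ω, ∃ s ∈ nhdsWithin x Ω, ∃ K : NNReal, LipschitzOnWith K φ s

/-- The measure `μ(dx) = e^{-φ(x)} dx` on the domain `Ω`. -/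
def measOf {n : ℕ} (Ω : Set (E n)) (φ : E n → ℝ) : Measure (E n) :=
  (volume.restrict Ω).withDensity fun x => ENNReal.ofReal (Real.exp (-φ x))

/-- `u ∈ C₀^∞(Ω)`: smooth and compactly supported inside `Ω`. -/
def TestFun {n : ℕ} (Ω : Set (E n)) (u : E n → ℝ) : Prop :=
  ContDiff ℝ (⊤ : ℕ∞) u ∧ HasCompactSupport u ∧ tsupport u ⊆ Ω

/-- The Hilbert–Schmidt norm of the Hessian of `u` at `x`. -/
def hessNormHS {n : ℕ} (u : E n → ℝ) (x : E n) : ℝ :=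
  Real.sqrt (∑ i : Fin n, ∑ j : Fin n,
    (iteratedFDeriv ℝ 2 u x ![EuclideanSpace.single i (1:ℝ), EuclideanSpace.single j (1:ℝ)]) ^ 2)

/-- The Luxemburg norm `‖f‖_{L^R(μ)} = inf {K > 0 : ∫ R(|f|/K) dμ ≤ 1}`. -/
def luxNorm {α : Type*} [MeasurableSpace α] (R : ℝ → ℝ) (μ : Measure α) (f : α → ℝ) : ℝ :=
  sInf {K : ℝ | 0 < K ∧ ∫ x, R (|f x| / K) ∂μ ≤ 1}

/-! ### Estimates for convex functions -/

/-- `M(λ)/λ` is nondecreasing, written without division. -/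
theorem cone_le {M : ℝ → ℝ} (hconv : ConvexOn ℝ (Ici 0) M) (h0 : M 0 = 0) {a b : ℝ}
    (hb : 0 ≤ b) (hab : b ≤ a) : M b * a ≤ M a * b := by
  rcases eq_or_lt_of_le (hb.trans hab) with ha | ha
  · have : b = 0 := by linarith
    subst this; simp [← ha]
  · have h := hconv.2 (show (0:ℝ) ∈ Ici 0 by simp) (show a ∈ Ici (0:ℝ) from ha.le)
      (show 0 ≤ 1 - b / a by rw [sub_nonneg, div_le_one ha]; exact hab)
      (show 0 ≤ b / a by positivity) (by ring)
    have e : b / a * a = b := by field_simp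
    simp only [smul_eq_mul, h0, mul_zero, zero_add, e] at h
    calc M b * a ≤ (b / a * M a) * a := by gcongr
      _ = M a * b := by field_simp

theorem mono_of_convex {M : ℝ → ℝ} (hconv : ConvexOn ℝ (Ici 0) M) (h0 : M 0 = 0)
    (hpos : ∀ x ≥ (0:ℝ), 0 ≤ M x) {a b : ℝ} (hb : 0 ≤ b) (hab : b ≤ a) : M b ≤ M a := by
  rcases eq_or_lt_of_le (hb.trans hab) with ha | ha
  · have : b = a := by linarith
    rw [this]
  · have h := cone_le hconv h0 hb hab
    have h2 : M a * b ≤ M a * a := by gcongr; exact hpos _ ha.le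
    exact le_of_mul_le_mul_right (h.trans h2) ha

/-- `M(λ)/λ²` is bounded on bounded intervals. Near zero convexity gives `M(λ)/λ ≤ M'(λ)`, and
`M'(λ)/λ` is bounded above there; away from zero it suffices that `M` is nondecreasing. At `λ = 0` the
quotient is `0` by convention. -/
theorem ratio_bound {M : ℝ → ℝ} (hM : CondM M) (R : ℝ) :
    ∃ C, 0 ≤ C ∧ ∀ l, 0 ≤ l → l ≤ R → M l / l ^ 2 ≤ C := by
  obtain ⟨⟨-, hconv, h0, hpos, -, -⟩, hC1, -, ε, hε, C, hC⟩ := hM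
  have hR : 0 ≤ M (max R 0) / ε ^ 2 :=
    div_nonneg (hpos _ (le_max_right _ _)) (by positivity)
  refine ⟨max C 0 + M (max R 0) / ε ^ 2, by positivity, fun l hl hlR => ?_⟩
  rcases eq_or_lt_of_le hl with rfl | hl
  · simpa using add_nonneg (le_max_right C 0) hR
  rcases lt_or_ge l ε with hlε | hlε
  · have hd : DifferentiableAt ℝ M l :=
      (hC1.differentiableOn (by norm_num)).differentiableAt (Ioi_mem_nhds hl)
    have h1 := hconv.slope_le_deriv (x := 0) (y := l) (by simp) (by simpa using hl.le) hl hd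
    rw [slope_def_field, h0, sub_zero, sub_zero] at h1
    have h2 : M l / l ^ 2 ≤ deriv M l / l := by
      rw [pow_two, ← div_div]; gcongr
    linarith [hC l ⟨hl, hlε⟩, le_max_left C 0]
  · have h1 : M l ≤ M (max R 0) :=
      mono_of_convex hconv h0 hpos hl.le (hlR.trans (le_max_left _ _))
    have h2 : M l / l ^ 2 ≤ M (max R 0) / ε ^ 2 := by
      gcongr
      exact hpos _ (le_max_right _ _)
    linarith [le_max_right C 0]

/-- The case `|q| ≤ |p|` of `field_sub_le`. With `m(λ) = M(λ)/λ²` the difference is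
`m(|p|)(p - q) + (m(|p|) - m(|q|))q`. Since `M(λ)/λ` is nondecreasing, and since convexity and Δ₂ bound
the slope of `M` on `[|q|, |p|]` by `(c - 1) M(|p|)/|p|`, one has
`|m(|p|) - m(|q|)||q| ≤ c m(|p|)(|p| - |q|)`. -/
theorem field_sub_le_aux {V : Type*} [NormedAddCommGroup V] [NormedSpace ℝ V] {M : ℝ → ℝ}
    (hconv : ConvexOn ℝ (Ici 0) M) (h0 : M 0 = 0) (hpos : ∀ x ≥ (0:ℝ), 0 ≤ M x) {c : ℝ}
    (hc1 : 1 ≤ c) (hc : ∀ l > (0:ℝ), M (2 * l) ≤ c * M l) (p q : V) (hqp : ‖q‖ ≤ ‖p‖) :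
    ‖(M ‖p‖ / ‖p‖ ^ 2) • p - (M ‖q‖ / ‖q‖ ^ 2) • q‖ ≤
      (c + 1) * (M ‖p‖ / ‖p‖ ^ 2) * ‖p - q‖ := by
  have hsplit : (M ‖p‖ / ‖p‖ ^ 2) • p - (M ‖q‖ / ‖q‖ ^ 2) • q
      = (M ‖p‖ / ‖p‖ ^ 2) • (p - q) + (M ‖p‖ / ‖p‖ ^ 2 - M ‖q‖ / ‖q‖ ^ 2) • q := by
    module
  have hm : 0 ≤ M ‖p‖ / ‖p‖ ^ 2 := div_nonneg (hpos _ (norm_nonneg _)) (by positivity)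
  have key : |M ‖p‖ / ‖p‖ ^ 2 - M ‖q‖ / ‖q‖ ^ 2| * ‖q‖ ≤
      c * (M ‖p‖ / ‖p‖ ^ 2) * (‖p‖ - ‖q‖) := by
    generalize ‖p‖ = a at *
    have hb : 0 ≤ ‖q‖ := norm_nonneg q
    generalize ‖q‖ = b at *
    rcases eq_or_lt_of_le hb with rfl | hb
    · simp only [mul_zero, sub_zero]
      have : 0 ≤ c := by linarith
      positivity
    rcases eq_or_lt_of_le hqp with rfl | hba
    · simp
    have ha : 0 < a := hb.trans hba
    have hcone := cone_le hconv h0 hb.le hba.le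
    -- The slope of `M` on `[b, a]` is at most the one on `[a, 2a]`, which Δ₂ controls.
    have hslope := hconv.slope_mono_adjacent (x := b) (y := a) (z := 2 * a)
      (by simpa using hb.le) (by simp; linarith) hba (by linarith)
    have hMa := hpos a ha.le
    have h2 : (M (2 * a) - M a) / (2 * a - a) ≤ (c - 1) * (M a / a) := by
      have : 2 * a - a = a := by ring
      rw [this, ← mul_div_assoc]
      gcongr
      linarith [hc a ha]
    have h3 : M a - M b ≤ (c - 1) * (M a / a) * (a - b) := by
      have := hslope.trans h2
      rwa [div_le_iff₀ (by linarith)] at this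
    rw [← abs_of_pos hb, ← abs_mul, abs_of_pos hb]
    have e : (M a / a ^ 2 - M b / b ^ 2) * b = M a / a ^ 2 * b - M b / b := by
      field_simp
    rw [e]
    set m := M a / a ^ 2 with hmdef
    have eMa : M a = m * a ^ 2 := by rw [hmdef]; field_simp
    have eMa' : M a / a = m * a := by rw [hmdef]; field_simp
    rw [eMa'] at h3
    rw [eMa] at h3 hcone
    have hd : 0 < a - b := by linarith
    rw [abs_le]
    constructor
    · have : M b / b ≤ m * a := by
        rw [div_le_iff₀ hb]
        exact le_of_mul_le_mul_right (by linarith : M b * a ≤ m * a * b * a) ha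
      nlinarith [mul_nonneg hm hd.le, mul_nonneg (mul_nonneg hm hd.le) (sub_nonneg.2 hc1)]
    · have h4 : M b / a ≤ M b / b := by
        gcongr
        exact hpos b hb.le
      have h5 : m * a - (c - 1) * m * (a - b) ≤ M b / a := by
        rw [le_div_iff₀ ha]
        nlinarith
      nlinarith [mul_nonneg hm hd.le]
  have htri : ‖p‖ - ‖q‖ ≤ ‖p - q‖ := norm_sub_norm_le p q
  calc _ = ‖(M ‖p‖ / ‖p‖ ^ 2) • (p - q) + (M ‖p‖ / ‖p‖ ^ 2 - M ‖q‖ / ‖q‖ ^ 2) • q‖ := by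
        rw [hsplit]
    _ ≤ (M ‖p‖ / ‖p‖ ^ 2) * ‖p - q‖ + |M ‖p‖ / ‖p‖ ^ 2 - M ‖q‖ / ‖q‖ ^ 2| * ‖q‖ := by
        refine (norm_add_le _ _).trans ?_
        rw [norm_smul, norm_smul, Real.norm_of_nonneg hm, Real.norm_eq_abs]
    _ ≤ (M ‖p‖ / ‖p‖ ^ 2) * ‖p - q‖ + c * (M ‖p‖ / ‖p‖ ^ 2) * ‖p - q‖ := by
        refine add_le_add_right (key.trans ?_) _
        have : 0 ≤ c := by linarith
        gcongr
    _ = _ := by ring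

/-- Difference estimate for the vector field `p ↦ M(|p|)|p|⁻² p`, including the points `p = 0` and
`q = 0`, where the field is `0` by the convention for division. -/
theorem field_sub_le {V : Type*} [NormedAddCommGroup V] [NormedSpace ℝ V] {M : ℝ → ℝ}
    (hconv : ConvexOn ℝ (Ici 0) M) (h0 : M 0 = 0) (hpos : ∀ x ≥ (0:ℝ), 0 ≤ M x) {c : ℝ}
    (hc1 : 1 ≤ c) (hc : ∀ l > (0:ℝ), M (2 * l) ≤ c * M l) (p q : V) :
    ‖(M ‖p‖ / ‖p‖ ^ 2) • p - (M ‖q‖ / ‖q‖ ^ 2) • q‖ ≤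
      (c + 1) * (M (max ‖p‖ ‖q‖) / (max ‖p‖ ‖q‖) ^ 2) * ‖p - q‖ := by
  rcases le_total ‖q‖ ‖p‖ with h | h
  · rw [max_eq_left h]; exact field_sub_le_aux hconv h0 hpos hc1 hc p q h
  · rw [max_eq_right h, norm_sub_rev, norm_sub_rev p q]
    exact field_sub_le_aux hconv h0 hpos hc1 hc q p h

/-- Condition (Y) extends to nonnegative arguments: the left-hand side vanishes as soon as one of
`u`, `v`, `w` is zero. -/
theorem young_nonneg {M P Q : ℝ → ℝ} (hpos : ∀ x ≥ (0:ℝ), 0 ≤ M x) (hY : CondY M P Q)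
    {u v w : ℝ} (hu : 0 ≤ u) (hv : 0 ≤ v) (hw : 0 ≤ w) :
    M u / u ^ 2 * v * w ≤ M u + P v + Q w := by
  obtain ⟨-, -, hP, hQ, -, -, -, -, h⟩ := hY
  have hR : 0 ≤ M u + P v + Q w := by linarith [hpos u hu, hP v hv, hQ w hw]
  rcases eq_or_lt_of_le hu with rfl | hu
  · simpa using hR
  rcases eq_or_lt_of_le hv with rfl | hv
  · simpa using hR
  rcases eq_or_lt_of_le hw with rfl | hw
  · simpa using hR
  exact h u hu v hv w hw

/-- Young bound for the derivative `ℓ` of a function `ω` along a curve `γ` when `ω` obeys the difference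
estimate of `field_sub_le`. The inequality (Y) is applied to difference quotients, so neither
differentiability of the field at `γ 0` nor `γ 0 ≠ 0` is needed. -/
theorem deriv_young {V : Type*} [NormedAddCommGroup V] [NormedSpace ℝ V] {M P Q : ℝ → ℝ}
    (hM : CondM M) (hY : CondY M P Q) {C s k θ H ℓ : ℝ} (hC : 0 < C) (hs : 0 ≤ s) (hk : 0 < k)
    (hθ : 0 < θ) {γ : ℝ → V} {γ' : V} (hγ : HasDerivAt γ γ' 0) (hH : ‖γ'‖ ≤ H)
    {ω : ℝ → ℝ} (hω : HasDerivAt ω ℓ 0)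
    (hlip : ∀ t, |ω t - ω 0| ≤ C * (M (max ‖γ t‖ ‖γ 0‖) / (max ‖γ t‖ ‖γ 0‖) ^ 2) * ‖γ t - γ 0‖) :
    k * (s * |ℓ|) ≤ M ‖γ 0‖ + P (θ * H) + Q (k * C / θ * s) := by
  have hpos := hM.1.2.2.2.1
  have hH0 : 0 ≤ H := (norm_nonneg _).trans hH
  have h1 : Tendsto (fun t : ℝ => |t⁻¹ • (ω (0 + t) - ω 0)|) (nhdsWithin 0 {0}ᶜ) (nhds |ℓ|) :=
    (hasDerivAt_iff_tendsto_slope_zero.1 hω).abs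
  have h2 : Tendsto (fun t : ℝ => ‖t⁻¹ • (γ (0 + t) - γ 0)‖) (nhdsWithin 0 {0}ᶜ) (nhds ‖γ'‖) :=
    (hasDerivAt_iff_tendsto_slope_zero.1 hγ).norm
  have hlam : Tendsto (fun t => max ‖γ t‖ ‖γ 0‖) (nhdsWithin 0 {0}ᶜ) (nhds ‖γ 0‖) := by
    have := (hγ.continuousAt.norm.max (continuousAt_const (y := ‖γ 0‖)))
    simp only [max_self] at this
    exact this.mono_left nhdsWithin_le_nhds
  have hlam0 : ∀ t, 0 ≤ max ‖γ t‖ ‖γ 0‖ := fun t => (norm_nonneg _).trans (le_max_left _ _)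
  have hslope : ∀ t : ℝ, |t⁻¹ • (ω (0 + t) - ω 0)| ≤
      C * (M (max ‖γ t‖ ‖γ 0‖) / (max ‖γ t‖ ‖γ 0‖) ^ 2) * ‖t⁻¹ • (γ (0 + t) - γ 0)‖ := by
    intro t
    rw [zero_add, norm_smul, smul_eq_mul, abs_mul, Real.norm_eq_abs]
    calc _ ≤ |t⁻¹| * (C * (M (max ‖γ t‖ ‖γ 0‖) / (max ‖γ t‖ ‖γ 0‖) ^ 2) * ‖γ t - γ 0‖) := by
          gcongr; exact hlip t
      _ = _ := by ring
  have hR : 0 ≤ M ‖γ 0‖ + P (θ * H) + Q (k * C / θ * s) := by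
    have := hpos _ (norm_nonneg (γ 0))
    have := hY.2.2.1 (θ * H) (by positivity)
    have := hY.2.2.2.1 (k * C / θ * s) (by positivity)
    linarith
  -- If `H = 0` then `γ' = 0`, and boundedness of `M(λ)/λ²` forces `ℓ = 0`. If `H > 0`, (Y) with
  -- `v = θ H`, `w = k C s / θ` bounds each difference quotient, up to the factor `‖γ'‖ / H ≤ 1`.
  rcases eq_or_lt_of_le hH0 with hH00 | hHpos
  · obtain ⟨B, hB0, hB⟩ := ratio_bound hM (‖γ 0‖ + 1)
    have hev : ∀ᶠ t in nhdsWithin (0:ℝ) {0}ᶜ, |t⁻¹ • (ω (0 + t) - ω 0)| ≤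
        C * B * ‖t⁻¹ • (γ (0 + t) - γ 0)‖ := by
      filter_upwards [hlam.eventually_le_const (lt_add_one _)] with t ht
      refine (hslope t).trans ?_
      gcongr
      exact hB _ (hlam0 t) ht
    have h3 := le_of_tendsto_of_tendsto h1 (h2.const_mul (C * B)) hev
    have : ‖γ'‖ = 0 := le_antisymm (hH.trans hH00.ge) (norm_nonneg _)
    rw [this, mul_zero] at h3
    have : |ℓ| = 0 := le_antisymm h3 (abs_nonneg _)
    rw [this]; simpa using hR
  · have hMc : Tendsto (fun t => M (max ‖γ t‖ ‖γ 0‖)) (nhdsWithin 0 {0}ᶜ) (nhds (M ‖γ 0‖)) := by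
      have hc : ContinuousWithinAt M (Ici 0) ‖γ 0‖ := hM.1.1 _ (by simp)
      exact hc.tendsto.comp (tendsto_nhdsWithin_iff.2 ⟨hlam, Eventually.of_forall hlam0⟩)
    have hev : ∀ t : ℝ, k * (s * |t⁻¹ • (ω (0 + t) - ω 0)|) ≤
        ‖t⁻¹ • (γ (0 + t) - γ 0)‖ / H *
          (M (max ‖γ t‖ ‖γ 0‖) + P (θ * H) + Q (k * C / θ * s)) := by
      intro t
      calc _ ≤ k * (s * (C * (M (max ‖γ t‖ ‖γ 0‖) / (max ‖γ t‖ ‖γ 0‖) ^ 2) *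
              ‖t⁻¹ • (γ (0 + t) - γ 0)‖)) := by gcongr; exact hslope t
        _ = ‖t⁻¹ • (γ (0 + t) - γ 0)‖ / H * (M (max ‖γ t‖ ‖γ 0‖) / (max ‖γ t‖ ‖γ 0‖) ^ 2 *
              (θ * H) * (k * C / θ * s)) := by field_simp
        _ ≤ _ := by
          gcongr
          exact young_nonneg hpos hY (hlam0 t) (by positivity) (by positivity)
    have h3 := le_of_tendsto_of_tendsto ((h1.const_mul s).const_mul k)
      ((h2.div_const H).mul ((hMc.add_const _).add_const _)) (Eventually.of_forall hev)
    refine h3.trans ?_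
    have : ‖γ'‖ / H ≤ 1 := (div_le_one hHpos).2 hH
    nlinarith

/-! ### Gradient and Hessian -/

theorem gradient_coord {n : ℕ} (u : E n → ℝ) (x : E n) (j : Fin n) :
    gradient u x j = fderiv ℝ u x (EuclideanSpace.single j 1) := by
  rw [← inner_gradient_left, EuclideanSpace.inner_single_right]; simp

theorem contDiff_gradient {n : ℕ} {u : E n → ℝ} (hu : ContDiff ℝ (⊤ : ℕ∞) u) :
    ContDiff ℝ (⊤ : ℕ∞) (gradient u) :=
  (InnerProductSpace.toDual ℝ (E n)).symm.contDiff.comp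
    (hu.fderiv_right (m := (⊤ : ℕ∞)) (by norm_cast))

theorem contDiff_gradient_coord {n : ℕ} {u : E n → ℝ} (hu : ContDiff ℝ (⊤ : ℕ∞) u)
    (j : Fin n) : ContDiff ℝ (⊤ : ℕ∞) (fun x => gradient u x j) :=
  (EuclideanSpace.proj (𝕜 := ℝ) j).contDiff.comp (contDiff_gradient hu)

theorem fderiv_gradient_coord {n : ℕ} {u : E n → ℝ} (hu : ContDiff ℝ (⊤ : ℕ∞) u) (x v : E n)
    (j : Fin n) : fderiv ℝ (fun y => gradient u y j) x v =
      iteratedFDeriv ℝ 2 u x ![v, EuclideanSpace.single j 1] := by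
  rw [iteratedFDeriv_two_apply]
  have hd : DifferentiableAt ℝ (fderiv ℝ u) x :=
    ((hu.fderiv_right (m := (⊤ : ℕ∞)) (by norm_cast)).differentiable (by simp)) x
  have : (fun y => gradient u y j) = fun y => fderiv ℝ u y (EuclideanSpace.single j 1) :=
    funext fun y => gradient_coord u y j
  rw [this, fderiv_clm_apply hd (differentiableAt_const _)]
  simp

theorem hess_nonneg {n : ℕ} (u : E n → ℝ) (x : E n) : 0 ≤ hessNormHS u x := Real.sqrt_nonneg _

theorem fderiv_gradient_apply {n : ℕ} {u : E n → ℝ} (hu : ContDiff ℝ (⊤ : ℕ∞) u) (x v : E n)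
    (j : Fin n) : fderiv ℝ (gradient u) x v j = fderiv ℝ (fun y => gradient u y j) x v := by
  have hd : DifferentiableAt ℝ (gradient u) x := (contDiff_gradient hu).differentiable (by simp) x
  have := (EuclideanSpace.proj (𝕜 := ℝ) j).hasFDerivAt.comp x hd.hasFDerivAt
  exact (DFunLike.congr_fun this.fderiv v).symm

theorem norm_fderiv_gradient_le {n : ℕ} {u : E n → ℝ} (hu : ContDiff ℝ (⊤ : ℕ∞) u) (x : E n)
    (i : Fin n) :
    ‖fderiv ℝ (gradient u) x (EuclideanSpace.single i 1)‖ ≤ hessNormHS u x := by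
  refine Real.le_sqrt_of_sq_le ?_
  rw [EuclideanSpace.real_norm_sq_eq]
  simp only [fderiv_gradient_apply hu, fderiv_gradient_coord hu]
  exact Finset.single_le_sum (f := fun i => ∑ j : Fin n, (iteratedFDeriv ℝ 2 u x
    ![EuclideanSpace.single i (1:ℝ), EuclideanSpace.single j (1:ℝ)]) ^ 2)
    (fun i _ => Finset.sum_nonneg fun j _ => sq_nonneg _) (Finset.mem_univ i)

/-- A column of the Hessian is bounded by the Hilbert–Schmidt norm; `norm_fderiv_gradient_le` does the
same for the rows. -/
theorem norm_gradient_coord_le {n : ℕ} {u : E n → ℝ} (hu : ContDiff ℝ (⊤ : ℕ∞) u) (x : E n)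
    (j : Fin n) : ‖gradient (fun y => gradient u y j) x‖ ≤ hessNormHS u x := by
  refine Real.le_sqrt_of_sq_le ?_
  rw [EuclideanSpace.real_norm_sq_eq]
  simp only [gradient_coord (fun y => gradient u y j), fderiv_gradient_coord hu]
  refine Finset.sum_le_sum fun i _ => ?_
  exact Finset.single_le_sum (f := fun j => (iteratedFDeriv ℝ 2 u x
    ![EuclideanSpace.single i (1:ℝ), EuclideanSpace.single j (1:ℝ)]) ^ 2)
    (fun j _ => sq_nonneg _) (Finset.mem_univ j)

theorem continuous_hess {n : ℕ} {u : E n → ℝ} (hu : ContDiff ℝ (⊤ : ℕ∞) u) :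
    Continuous (hessNormHS u) := by
  unfold hessNormHS
  have h : Continuous (iteratedFDeriv ℝ 2 u) := hu.continuous_iteratedFDeriv (by norm_cast)
  refine Real.continuous_sqrt.comp ?_
  refine continuous_finsetSum _ fun i _ => continuous_finsetSum _ fun j _ => ?_
  exact ((ContinuousMultilinearMap.apply ℝ (fun _ : Fin 2 => E n) ℝ _).continuous.comp h).pow 2

theorem gradient_eq_zero_off {n : ℕ} {u : E n → ℝ} {x : E n} (hx : x ∉ tsupport u) :
    gradient u x = 0 := by
  have : fderiv ℝ u x = 0 := by
    by_contra h
    exact hx (support_fderiv_subset ℝ h)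
  simp [gradient, this]

theorem hess_eq_zero_off {n : ℕ} {u : E n → ℝ} {x : E n} (hx : x ∉ tsupport u) :
    hessNormHS u x = 0 := by
  have : iteratedFDeriv ℝ 2 u x = 0 := by
    by_contra h
    exact hx (support_iteratedFDeriv_subset 2 h)
  simp [hessNormHS, this]

theorem testFun_gradient_coord {n : ℕ} {Ω : Set (E n)} {u : E n → ℝ} (hu : TestFun Ω u)
    (c : ℝ) (j : Fin n) : TestFun Ω (fun x => c * gradient u x j) := by
  have hsub : tsupport (fun x => c * gradient u x j) ⊆ tsupport u := by
    refine closure_minimal ?_ (isClosed_tsupport u)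
    intro x hx
    by_contra h
    exact hx (by simp [gradient_eq_zero_off h])
  exact ⟨contDiff_const.mul (contDiff_gradient_coord hu.1 j),
    hu.2.1.of_isClosed_subset (isClosed_tsupport _) hsub, hsub.trans hu.2.2⟩

theorem norm_gradient_const_mul_coord_le {n : ℕ} {u : E n → ℝ} (hu : ContDiff ℝ (⊤ : ℕ∞) u)
    {c : ℝ} (hc : 0 ≤ c) (x : E n) (j : Fin n) :
    ‖gradient (fun y => c * gradient u y j) x‖ ≤ c * hessNormHS u x := by
  have h : gradient (fun y => c * gradient u y j) x = c • gradient (fun y => gradient u y j) x := by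
    ext i
    rw [PiLp.smul_apply, gradient_coord, gradient_coord, fderiv_const_mul]
    · rfl
    · exact (contDiff_gradient_coord hu j).differentiable (by simp) x
  rw [h, norm_smul, Real.norm_of_nonneg hc]
  gcongr
  exact norm_gradient_coord_le hu x j

/-! ### Lipschitz functions and the weighted measure -/

/-- A Lipschitz function supported in a compact `K ⊆ Ω` times a locally Lipschitz function on `Ω` is
globally Lipschitz. The factors are Lipschitz and bounded on a closed `δ`-neighbourhood of `K`, and points
of `K` are at distance at least `δ` from its complement. -/
theorem lipschitz_mul_cutoff {V : Type*} [NormedAddCommGroup V] [ProperSpace V]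
    {Ω K : Set V} (hΩ : IsOpen Ω) (hK : IsCompact K) (hKΩ : K ⊆ Ω) {w ψ : V → ℝ} {D : NNReal}
    (hw : LipschitzWith D w) (hw0 : ∀ x ∉ K, w x = 0) (hψ : LocallyLipschitzOn Ω ψ) :
    ∃ D', LipschitzWith D' (fun x => w x * ψ x) := by
  obtain ⟨δ, hδ, hsub⟩ := hK.exists_cthickening_subset_open hΩ hKΩ
  set K' := Metric.cthickening δ K
  have hK' : IsCompact K' := hK.cthickening
  have hKK' : K ⊆ K' := Metric.self_subset_cthickening K
  obtain ⟨D₂, hD₂⟩ := LocallyLipschitzOn.exists_lipschitzOnWith_of_compact hK' (hψ.mono hsub)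
  obtain ⟨B₁, hB₁⟩ := hK'.exists_bound_of_continuousOn hw.continuous.continuousOn
  obtain ⟨B₂, hB₂⟩ := hK'.exists_bound_of_continuousOn hD₂.continuousOn
  have hout : ∀ x ∈ K, ∀ y ∉ K', |w x * ψ x - w y * ψ y| ≤ |B₁| * |B₂| / δ * dist x y := by
    intro x hx y hy
    rw [hw0 y fun h => hy (hKK' h), zero_mul, sub_zero, abs_mul]
    have hd : δ ≤ dist x y := by
      by_contra h
      push Not at h
      refine hy (Metric.mem_cthickening_of_dist_le y x δ K hx ?_)
      rw [dist_comm]; exact h.le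
    calc |w x| * |ψ x| ≤ |B₁| * |B₂| := by
          exact mul_le_mul ((hB₁ x (hKK' hx)).trans (le_abs_self _))
            ((hB₂ x (hKK' hx)).trans (le_abs_self _)) (abs_nonneg _) (abs_nonneg _)
      _ = |B₁| * |B₂| / δ * δ := by field_simp
      _ ≤ _ := by gcongr
  have hin : ∀ x ∈ K', ∀ y ∈ K', |w x * ψ x - w y * ψ y| ≤ (|B₁| * D₂ + |B₂| * D) * dist x y := by
    intro x hx y hy
    have e : w x * ψ x - w y * ψ y = w x * (ψ x - ψ y) + ψ y * (w x - w y) := by ring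
    rw [e]
    refine (abs_add_le _ _).trans ?_
    rw [abs_mul, abs_mul, add_mul, mul_assoc, mul_assoc]
    exact add_le_add
      (mul_le_mul ((hB₁ x hx).trans (le_abs_self _)) (hD₂.dist_le_mul x hx y hy)
        (abs_nonneg _) (abs_nonneg _))
      (mul_le_mul ((hB₂ y hy).trans (le_abs_self _)) (hw.dist_le_mul x y)
        (abs_nonneg _) (abs_nonneg _))
  refine ⟨Real.toNNReal (|B₁| * |B₂| / δ + (|B₁| * D₂ + |B₂| * D)),
    LipschitzWith.of_dist_le_mul fun x y => ?_⟩
  rw [Real.coe_toNNReal _ (by positivity), Real.dist_eq]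
  have n1 : 0 ≤ |B₁| * |B₂| / δ * dist x y := by positivity
  have n2 : 0 ≤ (|B₁| * D₂ + |B₂| * D) * dist x y := by positivity
  rw [add_mul]
  by_cases hx : x ∈ K'
  · by_cases hy : y ∈ K'
    · linarith [hin x hx y hy]
    · by_cases hxK : x ∈ K
      · linarith [hout x hxK y hy]
      · rw [hw0 x hxK, hw0 y fun h => hy (hKK' h)]; simp; linarith
  · by_cases hyK : y ∈ K
    · have := hout y hyK x hx
      rw [abs_sub_comm, dist_comm] at this
      linarith
    · rw [hw0 y hyK, hw0 x fun h => hx (hKK' h)]; simp; linarith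

theorem locLip_exp {n : ℕ} {Ω : Set (E n)} {φ : E n → ℝ} (hφ : LocLipschitzOn Ω φ) :
    LocallyLipschitzOn Ω (fun x => Real.exp (-φ x)) := by
  intro x hx
  obtain ⟨s, hs, K, hK⟩ := hφ x hx
  have hcont : ContinuousWithinAt φ Ω x := by
    have hxs : x ∈ s := mem_of_mem_nhdsWithin hx hs
    exact (hK.continuousOn x hxs).mono_of_mem_nhdsWithin hs
  obtain ⟨K₂, t, ht, hK₂⟩ :=
    (Real.contDiff_exp.comp contDiff_neg : ContDiff ℝ 1 (Real.exp ∘ Neg.neg)).locallyLipschitz (φ x)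
  exact ⟨K₂ * K, s ∩ φ ⁻¹' t, inter_mem hs (hcont ht),
    hK₂.comp (hK.mono inter_subset_left) fun y hy => hy.2⟩

theorem aemeasurable_density {n : ℕ} {Ω : Set (E n)} (hΩ : IsOpen Ω) {φ : E n → ℝ}
    (hφ : LocLipschitzOn Ω φ) :
    AEMeasurable (fun x => ENNReal.ofReal (Real.exp (-φ x))) (volume.restrict Ω) :=
  ((locLip_exp hφ).continuousOn.aemeasurable hΩ.measurableSet).ennreal_ofReal

theorem measOf_compact_lt_top {n : ℕ} {Ω K : Set (E n)} {φ : E n → ℝ}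
    (hφ : LocLipschitzOn Ω φ) (hK : IsCompact K) (hKΩ : K ⊆ Ω) : measOf Ω φ K < ⊤ := by
  obtain ⟨B, hB⟩ := hK.exists_bound_of_continuousOn ((locLip_exp hφ).continuousOn.mono hKΩ)
  rw [measOf, withDensity_apply _ hK.measurableSet]
  refine (setLIntegral_mono' (g := fun _ => ENNReal.ofReal B) hK.measurableSet fun x hx =>
    ENNReal.ofReal_le_ofReal ((le_abs_self _).trans (hB x hx))).trans_lt ?_
  rw [setLIntegral_const]
  refine ENNReal.mul_lt_top ENNReal.ofReal_lt_top ?_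
  exact (Measure.restrict_apply_le _ _).trans_lt hK.measure_lt_top

/-- A measurable function vanishing off a compact subset of `Ω` and bounded almost everywhere on it is
integrable, as `μ` is finite on compact subsets of `Ω`. -/
theorem integrable_of_support {n : ℕ} {Ω K : Set (E n)} {φ : E n → ℝ}
    (hφ : LocLipschitzOn Ω φ) (hK : IsCompact K) (hKΩ : K ⊆ Ω) {f : E n → ℝ}
    (hf : AEStronglyMeasurable f (measOf Ω φ)) (hf0 : ∀ x ∉ K, f x = 0) (C : ℝ)
    (hC : ∀ᵐ x ∂(measOf Ω φ), x ∈ K → |f x| ≤ C) : Integrable f (measOf Ω φ) := by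
  rw [← integrableOn_iff_integrable_of_support_subset (s := K)
    fun x hx => by_contra fun h => hx (hf0 x h)]
  exact IntegrableOn.of_bound (measOf_compact_lt_top hφ hK hKΩ) hf.restrict C
    ((ae_restrict_iff' hK.measurableSet).2 hC)

theorem measOf_integral {n : ℕ} {Ω : Set (E n)} (hΩ : IsOpen Ω) {φ : E n → ℝ}
    (hφ : LocLipschitzOn Ω φ) (f : E n → ℝ) :
    ∫ x, f x ∂(measOf Ω φ) = ∫ x in Ω, Real.exp (-φ x) * f x := by
  rw [measOf, integral_withDensity_eq_integral_toReal_smul₀ (aemeasurable_density hΩ hφ) (by simp)]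
  simp [ENNReal.toReal_ofReal (Real.exp_pos _).le]

theorem measOf_integrable {n : ℕ} {Ω : Set (E n)} (hΩ : IsOpen Ω) {φ : E n → ℝ}
    (hφ : LocLipschitzOn Ω φ) {f : E n → ℝ} (hf : Integrable f (measOf Ω φ)) :
    Integrable (fun x => Real.exp (-φ x) * f x) (volume.restrict Ω) := by
  rw [measOf, integrable_withDensity_iff_integrable_smul₀' (aemeasurable_density hΩ hφ) (by simp)]
    at hf
  simpa [ENNReal.toReal_ofReal (Real.exp_pos _).le] using hf

theorem measOf_ac {n : ℕ} {Ω : Set (E n)} {φ : E n → ℝ} : measOf Ω φ ≪ volume.restrict Ω :=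
  withDensity_absolutelyContinuous _ _

/-- `φ` is Lipschitz near a compact `K ⊆ Ω`, so its gradient is bounded on `K`. -/
theorem gradφ_bound {n : ℕ} {Ω K : Set (E n)} (hΩ : IsOpen Ω) {φ : E n → ℝ}
    (hφ : LocLipschitzOn Ω φ) {φ' : E n → E n}
    (hφ' : ∀ᵐ x ∂(volume.restrict Ω), HasGradientAt φ (φ' x) x) (hK : IsCompact K) (hKΩ : K ⊆ Ω) :
    ∃ C, 0 ≤ C ∧ ∀ᵐ x ∂(volume.restrict Ω), x ∈ K → ‖φ' x‖ ≤ C := by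
  obtain ⟨δ, hδ, hsub⟩ := hK.exists_cthickening_subset_open hΩ hKΩ
  have hll : LocallyLipschitzOn Ω φ := fun x hx => by
    obtain ⟨s, hs, K, hK⟩ := hφ x hx
    exact ⟨K, s, hs, hK⟩
  obtain ⟨D, hD⟩ := LocallyLipschitzOn.exists_lipschitzOnWith_of_compact hK.cthickening
    (hll.mono hsub)
  refine ⟨D, D.2, ?_⟩
  filter_upwards [hφ'] with x hx hxK
  have hnhds : Metric.cthickening δ K ∈ nhds x :=
    mem_of_superset (Metric.isOpen_thickening.mem_nhds (Metric.self_subset_thickening hδ K hxK))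
      (Metric.thickening_subset_cthickening δ K)
  have := norm_fderiv_le_of_lipschitzOn ℝ hnhds hD
  rw [(hasGradientAt_iff_hasFDerivAt.1 hx).fderiv] at this
  simpa using this

/-- The a.e. gradient agrees almost everywhere with the measurable function `fderiv ℝ φ`. -/
theorem gradφ_norm_aemeasurable {n : ℕ} {Ω : Set (E n)} {φ : E n → ℝ} {φ' : E n → E n}
    (hφ' : ∀ᵐ x ∂(volume.restrict Ω), HasGradientAt φ (φ' x) x) :
    AEMeasurable (fun x => ‖φ' x‖) (measOf Ω φ) := by
  refine AEMeasurable.mono_ac ?_ measOf_ac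
  refine ⟨fun x => ‖fderiv ℝ φ x‖, (measurable_fderiv ℝ φ).norm, ?_⟩
  filter_upwards [hφ'] with x hx
  rw [(hasGradientAt_iff_hasFDerivAt.1 hx).fderiv]
  simp

/-! ### Integration by parts -/

theorem exists_coord_ge {n : ℕ} (p : E n) : ‖p‖ = 0 ∨ ∃ j, ‖p‖ ≤ (n + 1) * |p j| := by
  by_contra! h
  obtain ⟨h0, h⟩ := h
  have hpos : 0 < ‖p‖ ^ 2 := by positivity
  have h1 : ∀ j, ((n:ℝ) + 1) ^ 2 * p j ^ 2 ≤ ‖p‖ ^ 2 := fun j => by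
    rw [← sq_abs (p j), ← mul_pow]
    exact pow_le_pow_left₀ (by positivity) (h j).le 2
  have h2 := Finset.sum_le_sum fun j (_ : j ∈ Finset.univ) => h1 j
  rw [← Finset.mul_sum, ← EuclideanSpace.real_norm_sq_eq, Finset.sum_const, Finset.card_univ,
    Fintype.card_fin, nsmul_eq_mul] at h2
  have hn : (0:ℝ) ≤ n := n.cast_nonneg
  nlinarith [mul_nonneg hn hpos.le, mul_nonneg (mul_nonneg hn hn) hpos.le]

/-- Replaces the norm of `p` inside `P` by its coordinates. As `P` need not satisfy a doubling condition,
the factor `n + 1` stays inside `P`. -/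
theorem P_norm_le_sum {n : ℕ} {M P Q : ℝ → ℝ} (hY : CondY M P Q) (p : E n) {a ε : ℝ}
    (ha : 0 ≤ a) (hε : 0 ≤ ε) :
    P (ε * ‖p‖ * a) ≤ ∑ j, P (a * |((n + 1) * ε) * p j|) := by
  obtain ⟨-, -, hP, -, hPm, -, hP0, -, -⟩ := hY
  have hnn : ∀ j, 0 ≤ P (a * |((n + 1) * ε) * p j|) := fun j => hP _ (by positivity)
  rcases exists_coord_ge p with h | ⟨j, hj⟩
  · simp only [h, mul_zero, zero_mul, hP0]
    exact Finset.sum_nonneg fun j _ => hnn j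
  · refine (hPm (by simp; positivity) (by simp; positivity) ?_).trans
      (Finset.single_le_sum (f := fun j => P (a * |((n + 1) * ε) * p j|))
        (fun j _ => hnn j) (Finset.mem_univ j))
    rw [abs_mul, abs_of_nonneg (by positivity : 0 ≤ (n + 1 : ℝ) * ε)]
    calc ε * ‖p‖ * a ≤ ε * ((n + 1) * |p j|) * a := by gcongr
      _ = _ := by ring

/-- The coordinates of `M(|∇u|)|∇u|⁻² ∇u` are Lipschitz for a test function `u`. -/
theorem exists_lipschitz_field {n : ℕ} {M : ℝ → ℝ} (hM : CondM M) {c : ℝ} (hc1 : 1 ≤ c)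
    (hc : ∀ l > (0:ℝ), M (2 * l) ≤ c * M l) {u : E n → ℝ} (hu : ContDiff ℝ (⊤ : ℕ∞) u)
    (hsupp : HasCompactSupport u) (i : Fin n) :
    ∃ D, LipschitzWith D
      (fun x => ((M ‖gradient u x‖ / ‖gradient u x‖ ^ 2) • gradient u x : E n) i) := by
  have hgs : HasCompactSupport (gradient u) :=
    HasCompactSupport.intro hsupp fun x hx => gradient_eq_zero_off hx
  obtain ⟨D, hD⟩ := (contDiff_gradient hu).lipschitzWith_of_hasCompactSupport hgs (by simp)
  obtain ⟨R, hR⟩ := hgs.exists_bound_of_continuous (contDiff_gradient hu).continuous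
  obtain ⟨B, hB0, hB⟩ := ratio_bound hM R
  have hc0 : 0 ≤ c + 1 := by linarith
  refine ⟨Real.toNNReal ((c + 1) * B * D), LipschitzWith.of_dist_le_mul fun x y => ?_⟩
  rw [Real.coe_toNNReal _ (by positivity), Real.dist_eq, ← PiLp.sub_apply, ← Real.norm_eq_abs]
  refine (PiLp.norm_apply_le _ i).trans ?_
  refine (field_sub_le hM.1.2.1 hM.1.2.2.1 hM.1.2.2.2.1 hc1 hc _ _).trans ?_
  rw [mul_assoc _ (D : ℝ)]
  gcongr
  · exact hB _ ((norm_nonneg _).trans (le_max_left _ _)) (max_le (hR x) (hR y))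
  · rw [← dist_eq_norm]; exact hD.dist_le_mul x y

/-- Integration by parts combined with the pointwise Young bounds: if `R` dominates their right-hand
sides, then `k ∫ M(|∇u|) dμ ≤ n ∫ R dμ`. One copy of `R` is spent on each of the `n` partial derivatives. -/
theorem ibp_bound {n : ℕ} {Ω : Set (E n)} (hΩ : IsOpen Ω)
    {M P Q : ℝ → ℝ} (hM : CondM M) (hY : CondY M P Q)
    {φ : E n → ℝ} (hφ : LocLipschitzOn Ω φ) {φ' : E n → E n}
    (hφ' : ∀ᵐ x ∂(volume.restrict Ω), HasGradientAt φ (φ' x) x)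
    {c : ℝ} (hc1 : 1 ≤ c) (hc : ∀ l > (0:ℝ), M (2 * l) ≤ c * M l)
    {k θ ε : ℝ} (hk : 0 < k) (hθ : 0 < θ) (hε : 0 < ε) {u : E n → ℝ} (hu : TestFun Ω u)
    {R : E n → ℝ} (hR : Integrable R (measOf Ω φ))
    (hRdef : ∀ x, M ‖gradient u x‖ + P (θ * hessNormHS u x) + Q (k * (c + 1) / θ * |u x|) +
      (M ‖gradient u x‖ + P (ε * ‖gradient u x‖ * ‖φ' x‖) + Q (k / ε * |u x|)) ≤ R x) :
    k * ∫ x, M ‖gradient u x‖ ∂(measOf Ω φ) ≤ n * ∫ x, R x ∂(measOf Ω φ) := by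
  obtain ⟨hu1, husupp, huΩ⟩ := hu
  have hpos := hM.1.2.2.2.1
  have hM0 := hM.1.2.2.1
  -- The vector field `w = M(|∇u|)|∇u|⁻² ∇u`.
  set w : Fin n → E n → ℝ := fun i x =>
    ((M ‖gradient u x‖ / ‖gradient u x‖ ^ 2) • gradient u x : E n) i with hw
  have hw0 : ∀ i, ∀ x ∉ tsupport u, w i x = 0 := fun i x hx => by
    simp [hw, gradient_eq_zero_off hx]
  have hwlip : ∀ i, ∃ D, LipschitzWith D (w i) := exists_lipschitz_field hM hc1 hc hu1 husupp
  choose D hD using hwlip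
  have hglip : ∀ i, ∃ D', LipschitzWith D' (fun x => w i x * Real.exp (-φ x)) := fun i =>
    lipschitz_mul_cutoff hΩ husupp huΩ (hD i) (hw0 i) (locLip_exp hφ)
  choose D' hD' using hglip
  obtain ⟨Du, hDu⟩ := hu1.lipschitzWith_of_hasCompactSupport husupp (by simp)
  have hgsupp : ∀ i, HasCompactSupport (fun x => w i x * Real.exp (-φ x)) := fun i =>
    HasCompactSupport.intro husupp fun x hx => by simp [hw0 i x hx]
  have hdu : ∀ x i, lineDeriv ℝ u x (EuclideanSpace.single i 1) = gradient u x i := fun x i => by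
    rw [gradient_coord]
    exact (hu1.differentiable (by simp) x).lineDeriv_eq_fderiv
  have hLHS : ∫ x, M ‖gradient u x‖ ∂(measOf Ω φ) =
      ∑ i, ∫ x, lineDeriv ℝ u x (EuclideanSpace.single i 1) * (w i x * Real.exp (-φ x)) := by
    rw [measOf_integral hΩ hφ, setIntegral_eq_integral_of_forall_compl_eq_zero
      (fun x hx => by simp [gradient_eq_zero_off (fun h => hx (huΩ h)), hM0]),
      ← integral_finsetSum]
    · congr 1
      ext x
      have : ∀ i, lineDeriv ℝ u x (EuclideanSpace.single i 1) * (w i x * Real.exp (-φ x)) =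
          Real.exp (-φ x) * (M ‖gradient u x‖ / ‖gradient u x‖ ^ 2) * (gradient u x i) ^ 2 := by
        intro i
        rw [hdu]
        simp only [hw, PiLp.smul_apply, smul_eq_mul]
        ring
      simp only [this]
      rw [← Finset.mul_sum, ← EuclideanSpace.real_norm_sq_eq]
      rcases eq_or_ne ‖gradient u x‖ 0 with h | h
      · simp [h, hM0]
      · field_simp
    · intro i _
      simp only [hdu]
      refine Continuous.integrable_of_hasCompactSupport
        ((contDiff_gradient_coord hu1 i).continuous.mul (hD' i).continuous) ?_
      exact (hgsupp i).mul_left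
  have hae : ∀ i, ∀ᵐ x ∂(volume.restrict Ω),
      |lineDeriv ℝ (fun x => w i x * Real.exp (-φ x)) x (-EuclideanSpace.single i 1) * u x| ≤
        k⁻¹ * (Real.exp (-φ x) * R x) := by
    intro i
    -- Rademacher's theorem along a line: `w i` is a.e. differentiable in direction `eᵢ`, and so is
    -- `e^{-φ}` because `φ` is a.e. differentiable.
    filter_upwards [hφ', ae_restrict_of_ae
      ((hD i).ae_lineDifferentiableAt (μ := volume) (EuclideanSpace.single i 1))] with x hx hwx
    set e : E n := EuclideanSpace.single i 1 with he
    obtain ⟨ℓ, hℓ⟩ : ∃ ℓ, HasLineDerivAt ℝ (w i) ℓ x e := ⟨_, hwx.hasLineDerivAt⟩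
    have hφl : HasLineDerivAt ℝ φ (inner ℝ (φ' x) e) x e := by
      have := (hasGradientAt_iff_hasFDerivAt.1 hx).hasLineDerivAt e
      simpa using this
    have hinner : inner ℝ (φ' x) e = φ' x i := by
      rw [he, EuclideanSpace.inner_single_right]; simp
    rw [hinner] at hφl
    have hg : lineDeriv ℝ (fun x => w i x * Real.exp (-φ x)) x e =
        ℓ * Real.exp (-φ x) + w i x * (Real.exp (-φ x) * -(φ' x i)) := by
      have h1 : HasDerivAt (fun t : ℝ => w i (x + t • e)) ℓ 0 := hℓ
      have h2 : HasDerivAt (fun t : ℝ => φ (x + t • e)) (φ' x i) 0 := hφl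
      have h3 := h1.fun_mul h2.fun_neg.exp
      simp only [zero_smul, add_zero] at h3
      exact HasLineDerivAt.lineDeriv (𝕜 := ℝ) h3
    have hwabs : |w i x| ≤ M ‖gradient u x‖ / ‖gradient u x‖ ^ 2 * ‖gradient u x‖ := by
      rw [← Real.norm_eq_abs]
      refine (PiLp.norm_apply_le _ i).trans ?_
      rw [norm_smul, Real.norm_of_nonneg (div_nonneg (hpos _ (norm_nonneg _)) (by positivity))]
    have hA : k * (|u x| * |ℓ|) ≤ M ‖gradient u x‖ + P (θ * hessNormHS u x) +
        Q (k * (c + 1) / θ * |u x|) := by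
      have hgd : DifferentiableAt ℝ (gradient u) x :=
        (contDiff_gradient hu1).differentiable (by simp) x
      have hγ : HasDerivAt (fun t : ℝ => gradient u (x + t • e)) (fderiv ℝ (gradient u) x e) 0 :=
        hgd.hasFDerivAt.hasLineDerivAt e
      have hω : HasDerivAt (fun t : ℝ => w i (x + t • e)) ℓ 0 := hℓ
      have := deriv_young hM hY (by linarith : 0 < c + 1) (abs_nonneg (u x)) hk hθ hγ
        (norm_fderiv_gradient_le hu1 x i) hω (fun t => by
          rw [← Real.norm_eq_abs, hw, ← PiLp.sub_apply]
          exact (PiLp.norm_apply_le _ i).trans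
            (field_sub_le hM.1.2.1 hM0 hpos hc1 hc _ _))
      simpa using this
    have hB : k * (|w i x| * |φ' x i| * |u x|) ≤ M ‖gradient u x‖ +
        P (ε * ‖gradient u x‖ * ‖φ' x‖) + Q (k / ε * |u x|) := by
      have hc1 : |φ' x i| ≤ ‖φ' x‖ := PiLp.norm_apply_le (φ' x) i
      calc k * (|w i x| * |φ' x i| * |u x|) ≤ k * (M ‖gradient u x‖ / ‖gradient u x‖ ^ 2 *
            ‖gradient u x‖ * ‖φ' x‖ * |u x|) := by
            have := (abs_nonneg _).trans hwabs
            gcongr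
        _ = M ‖gradient u x‖ / ‖gradient u x‖ ^ 2 * (ε * ‖gradient u x‖ * ‖φ' x‖) *
            (k / ε * |u x|) := by field_simp
        _ ≤ _ := young_nonneg hpos hY (norm_nonneg _) (by positivity) (by positivity)
    have hexp := Real.exp_pos (-φ x)
    rw [lineDeriv_neg, hg, inv_mul_eq_div, le_div_iff₀ hk]
    calc |-(ℓ * Real.exp (-φ x) + w i x * (Real.exp (-φ x) * -(φ' x i))) * u x| * k
        = Real.exp (-φ x) * (k * (|u x| * |ℓ - w i x * φ' x i|)) := by
          rw [show -(ℓ * Real.exp (-φ x) + w i x * (Real.exp (-φ x) * -(φ' x i))) * u x =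
            -(Real.exp (-φ x) * (u x * (ℓ - w i x * φ' x i))) by ring, abs_neg, abs_mul, abs_mul,
            abs_of_pos hexp]
          ring
      _ ≤ Real.exp (-φ x) * (k * (|u x| * (|ℓ| + |w i x| * |φ' x i|))) := by
          gcongr
          rw [← abs_mul]; exact abs_sub _ _
      _ = Real.exp (-φ x) * (k * (|u x| * |ℓ|) + k * (|w i x| * |φ' x i| * |u x|)) := by ring
      _ ≤ Real.exp (-φ x) * R x := by
          gcongr
          linarith [hRdef x]
  have hterm : ∀ i, ∫ x, lineDeriv ℝ u x (EuclideanSpace.single i 1) *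
      (w i x * Real.exp (-φ x)) ≤ k⁻¹ * ∫ x, R x ∂(measOf Ω φ) := by
    intro i
    rw [hDu.integral_lineDeriv_mul_eq (hD' i) (hgsupp i),
      ← setIntegral_eq_integral_of_forall_compl_eq_zero (s := Ω) (fun x hx => by
        rw [image_eq_zero_of_notMem_tsupport (fun h => hx (huΩ h)), mul_zero]),
      measOf_integral hΩ hφ, ← integral_const_mul]
    refine (le_abs_self _).trans (abs_integral_le_integral_abs.trans ?_)
    exact integral_mono_of_nonneg (Eventually.of_forall fun x => abs_nonneg _)
      ((measOf_integrable hΩ hφ hR).const_mul _) (hae i)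
  have hsum := Finset.sum_le_sum fun i (_ : i ∈ Finset.univ) => hterm i
  rw [← hLHS, Finset.sum_const, Finset.card_univ, Fintype.card_fin, nsmul_eq_mul] at hsum
  calc k * ∫ x, M ‖gradient u x‖ ∂(measOf Ω φ)
      ≤ k * (n * (k⁻¹ * ∫ x, R x ∂(measOf Ω φ))) := by gcongr
    _ = _ := by field_simp

/-! ### The modular inequality -/

/-- `P` is not assumed continuous; monotonicity yields the bound `P (f x) ≤ P C`. -/
theorem integrable_monotone_comp {n : ℕ} {Ω K : Set (E n)} {φ : E n → ℝ}
    (hφ : LocLipschitzOn Ω φ) (hK : IsCompact K) (hKΩ : K ⊆ Ω) {P : ℝ → ℝ} (hP : Measurable P)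
    (hPm : MonotoneOn P (Ici 0)) (hPnn : ∀ x ≥ (0:ℝ), 0 ≤ P x) (hP0 : P 0 = 0) {f : E n → ℝ}
    (hf : AEMeasurable f (measOf Ω φ)) (hfnn : ∀ x, 0 ≤ f x) (hf0 : ∀ x ∉ K, f x = 0) {C : ℝ}
    (hC : ∀ᵐ x ∂(measOf Ω φ), x ∈ K → f x ≤ C) :
    Integrable (fun x => P (f x)) (measOf Ω φ) := by
  refine integrable_of_support hφ hK hKΩ (hP.comp_aemeasurable hf).aestronglyMeasurable
    (fun x hx => by rw [hf0 x hx, hP0]) (P C) ?_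
  filter_upwards [hC] with x hx hxK
  rw [abs_of_nonneg (hPnn _ (hfnn x))]
  exact hPm (hfnn x) ((hfnn x).trans (hx hxK)) (hx hxK)

theorem integrable_monotone_comp_continuous {n : ℕ} {Ω K : Set (E n)} {φ : E n → ℝ}
    (hφ : LocLipschitzOn Ω φ) (hK : IsCompact K) (hKΩ : K ⊆ Ω) {P : ℝ → ℝ} (hP : Measurable P)
    (hPm : MonotoneOn P (Ici 0)) (hPnn : ∀ x ≥ (0:ℝ), 0 ≤ P x) (hP0 : P 0 = 0) {f : E n → ℝ}
    (hf : Continuous f) (hfnn : ∀ x, 0 ≤ f x) (hf0 : ∀ x ∉ K, f x = 0) :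
    Integrable (fun x => P (f x)) (measOf Ω φ) := by
  obtain ⟨C, hC⟩ := hK.exists_bound_of_continuousOn hf.continuousOn
  exact integrable_monotone_comp hφ hK hKΩ hP hPm hPnn hP0 hf.aemeasurable hfnn hf0
    (Eventually.of_forall fun x hx => (le_abs_self _).trans (hC x hx))

theorem integrable_M_comp {n : ℕ} {Ω K : Set (E n)} {φ : E n → ℝ} {M : ℝ → ℝ} (hM : CondM M)
    (hφ : LocLipschitzOn Ω φ) (hK : IsCompact K) (hKΩ : K ⊆ Ω) {f : E n → ℝ}
    (hf : Continuous f) (hfnn : ∀ x, 0 ≤ f x) (hf0 : ∀ x ∉ K, f x = 0) :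
    Integrable (fun x => M (f x)) (measOf Ω φ) := by
  have hc : Continuous fun x => M (f x) := hM.1.1.comp_continuous hf hfnn
  obtain ⟨C, hC⟩ := hK.exists_bound_of_continuousOn hc.continuousOn
  exact integrable_of_support hφ hK hKΩ hc.aestronglyMeasurable
    (fun x hx => by rw [hf0 x hx, hM.1.2.2.1]) C (Eventually.of_forall hC)

/-- Theorem 3.5(1): the Hardy-type inequality (H1) implies the modular
Gagliardo–Nirenberg inequality for all `θ ∈ (0,1]`. -/
theorem statement3 {n : ℕ} (Ω : Set (E n)) (hΩ : IsOpen Ω)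
    (M P Q : ℝ → ℝ) (hM : CondM M) (hY : CondY M P Q)
    (φ : E n → ℝ) (hφ : LocLipschitzOn Ω φ) (φ' : E n → E n)
    (hφ' : ∀ᵐ x ∂(volume.restrict Ω), HasGradientAt φ (φ' x) x)
    (K₁ K₂ A : ℝ) (hK₁ : 0 < K₁) (hK₂ : 0 < K₂) (hA : 0 < A)
    (hH1 : ∀ u : E n → ℝ, TestFun Ω u →
      ∫ x, P (‖φ' x‖ * |u x|) ∂(measOf Ω φ) ≤
        K₁ * ∫ x, P (A * ‖gradient u x‖) ∂(measOf Ω φ)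
          + K₂ * ∫ x, M |u x| ∂(measOf Ω φ)) :
    ∃ L > (0:ℝ), ∃ B > (0:ℝ), ∀ θ ∈ Ioc (0:ℝ) 1, ∀ u : E n → ℝ, TestFun Ω u →
      ∫ x, M ‖gradient u x‖ ∂(measOf Ω φ) ≤
        L * ∫ x, P (θ * hessNormHS u x) ∂(measOf Ω φ)
          + ∫ x, Q (B / θ * |u x|) ∂(measOf Ω φ) := by
  obtain ⟨hPmeas, hQmeas, hP, hQ, hPm, hQm, hP0, hQ0, -⟩ := id hY
  have hpos := hM.1.2.2.2.1
  have hM0 := hM.1.2.2.1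
  have hMmono : ∀ {a b : ℝ}, 0 ≤ b → b ≤ a → M b ≤ M a := fun hb hab =>
    mono_of_convex hM.1.2.1 hM0 hpos hb hab
  obtain ⟨c₀, hc₀, hΔ⟩ := hM.2.2.1
  set c := max c₀ 1 with hcdef
  have hc1 : 1 ≤ c := le_max_right _ _
  have hc : ∀ l > (0:ℝ), M (2 * l) ≤ c * M l := fun l hl =>
    (hΔ l hl).trans (mul_le_mul_of_nonneg_right (le_max_left _ _) (hpos l hl.le))
  have hn : (0:ℝ) ≤ n := n.cast_nonneg
  set k : ℝ := 2 * n * (2 + n * K₂) + 4 * n + 1 with hkdef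
  have hk : 0 < k := by positivity
  refine ⟨2 * (n / k) * (1 + n * K₁) + 1, by positivity,
    k * (c + 1) + k * ((n + 1) * (A + 1)), by positivity, ?_⟩
  rintro θ ⟨hθ, hθ1⟩ u hu
  obtain ⟨hu1, husupp, huΩ⟩ := id hu
  set B : ℝ := k * (c + 1) + k * ((n + 1) * (A + 1)) with hB
  -- Small enough that `(n + 1) ε ≤ 1` and `A (n + 1) ε ≤ θ`.
  set ε : ℝ := θ / ((n + 1) * (A + 1)) with hεdef
  have hε : 0 < ε := by positivity
  have hεn : (n + 1) * ε = θ / (A + 1) := by rw [hεdef]; field_simp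
  have hδ0 : 0 < (n + 1) * ε := by positivity
  have hδ1 : (n + 1) * ε ≤ 1 := by
    rw [hεn, div_le_one (by positivity)]; linarith
  have hδA : A * ((n + 1) * ε) ≤ θ := by
    rw [hεn, ← mul_div_assoc, div_le_iff₀ (by positivity)]; nlinarith
  have hgcont : Continuous fun x => ‖gradient u x‖ := (contDiff_gradient hu1).continuous.norm
  have hg0 : ∀ x ∉ tsupport u, ‖gradient u x‖ = 0 := fun x hx => by simp [gradient_eq_zero_off hx]
  have iM : Integrable (fun x => M ‖gradient u x‖) (measOf Ω φ) :=
    integrable_M_comp hM hφ husupp huΩ hgcont (fun x => norm_nonneg _) hg0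
  have iP : Integrable (fun x => P (θ * hessNormHS u x)) (measOf Ω φ) :=
    integrable_monotone_comp_continuous hφ husupp huΩ hPmeas hPm hP hP0
      ((continuous_hess hu1).const_mul θ) (fun x => mul_nonneg hθ.le (hess_nonneg u x))
      (fun x hx => by rw [hess_eq_zero_off hx, mul_zero])
  have iQ : Integrable (fun x => Q (B / θ * |u x|)) (measOf Ω φ) :=
    integrable_monotone_comp_continuous hφ husupp huΩ hQmeas hQm hQ hQ0
      (hu1.continuous.abs.const_mul _) (fun x => by positivity)
      (fun x hx => by rw [image_eq_zero_of_notMem_tsupport hx, abs_zero, mul_zero])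
  obtain ⟨G, hG0, hG⟩ := gradφ_bound hΩ hφ hφ' husupp huΩ
  -- The functions to which the Hardy-type inequality is applied.
  set v : Fin n → E n → ℝ := fun j x => ((n + 1) * ε) * gradient u x j with hv
  have hvtest : ∀ j, TestFun Ω (v j) := fun j => testFun_gradient_coord hu _ j
  have hv0 : ∀ j, ∀ x ∉ tsupport u, v j x = 0 := fun j x hx => by
    simp [hv, gradient_eq_zero_off hx]
  have hvle : ∀ j x, |v j x| ≤ ‖gradient u x‖ := fun j x => by
    simp only [hv]
    rw [abs_mul, abs_of_pos hδ0]
    have h1 : |gradient u x j| ≤ ‖gradient u x‖ := PiLp.norm_apply_le (gradient u x) j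
    exact (mul_le_of_le_one_left (abs_nonneg _) hδ1).trans h1
  have ivP : ∀ j, Integrable (fun x => P (‖φ' x‖ * |v j x|)) (measOf Ω φ) := fun j => by
    obtain ⟨W, hW⟩ := husupp.exists_bound_of_continuousOn (hvtest j).1.continuous.continuousOn
    refine integrable_monotone_comp hφ husupp huΩ hPmeas hPm hP hP0 (C := G * W)
      ((gradφ_norm_aemeasurable hφ').mul (hvtest j).1.continuous.abs.aemeasurable)
      (fun x => by positivity) (fun x hx => by rw [hv0 j x hx, abs_zero, mul_zero]) ?_
    filter_upwards [measOf_ac.ae_le hG] with x hx hxK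
    exact mul_le_mul (hx hxK) (hW x hxK) (abs_nonneg _) hG0
  have hHardy : ∀ j, ∫ x, P (‖φ' x‖ * |v j x|) ∂(measOf Ω φ) ≤
      K₁ * ∫ x, P (θ * hessNormHS u x) ∂(measOf Ω φ)
        + K₂ * ∫ x, M ‖gradient u x‖ ∂(measOf Ω φ) := by
    intro j
    refine (hH1 (v j) (hvtest j)).trans ?_
    gcongr ?_ * ?_ + ?_ * ?_
    · refine integral_mono_of_nonneg (Eventually.of_forall fun x => hP _ (by positivity)) iP
        (Eventually.of_forall fun x => hPm (by simp; positivity)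
          (mul_nonneg hθ.le (hess_nonneg u x)) ?_)
      calc A * ‖gradient (v j) x‖ ≤ A * (((n + 1) * ε) * hessNormHS u x) := by
            gcongr; exact norm_gradient_const_mul_coord_le hu1 hδ0.le x j
        _ = A * ((n + 1) * ε) * hessNormHS u x := by ring
        _ ≤ _ := by gcongr; exact hess_nonneg u x
    · exact integral_mono_of_nonneg (Eventually.of_forall fun x => hpos _ (abs_nonneg _)) iM
        (Eventually.of_forall fun x => hMmono (abs_nonneg _) (hvle j x))
  have iSum : Integrable (fun x => ∑ j, P (‖φ' x‖ * |v j x|)) (measOf Ω φ) :=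
    integrable_finsetSum _ fun j _ => ivP j
  have i2M := iM.const_mul 2
  have i2Q := iQ.const_mul 2
  have hmain := ibp_bound hΩ hM hY hφ hφ' hc1 hc hk hθ hε hu
    (R := fun x => 2 * M ‖gradient u x‖ + P (θ * hessNormHS u x) +
      ∑ j, P (‖φ' x‖ * |v j x|) + 2 * Q (B / θ * |u x|))
    (((i2M.add iP).add iSum).add i2Q) (fun x => by
      have h1 : Q (k * (c + 1) / θ * |u x|) ≤ Q (B / θ * |u x|) := by
        refine hQm (by simp; positivity) (by simp; positivity) ?_
        gcongr
        rw [hB]; linarith [show 0 ≤ k * ((n + 1) * (A + 1)) by positivity]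
      have h2 : Q (k / ε * |u x|) ≤ Q (B / θ * |u x|) := by
        refine hQm (by simp; positivity) (by simp; positivity) ?_
        have : k / ε = k * ((n + 1) * (A + 1)) / θ := by rw [hεdef]; field_simp
        rw [this]
        gcongr
        rw [hB]; linarith [show 0 ≤ k * (c + 1) by positivity]
      have h3 := P_norm_le_sum hY (gradient u x) (norm_nonneg (φ' x)) hε.le
      linarith)
  rw [integral_add ((i2M.fun_add iP).fun_add iSum) i2Q, integral_add (i2M.fun_add iP) iSum,
    integral_add i2M iP, integral_const_mul, integral_const_mul,
    integral_finsetSum _ fun j _ => ivP j] at hmain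
  have hsum := Finset.sum_le_sum fun j (_ : j ∈ Finset.univ) => hHardy j
  rw [Finset.sum_const, Finset.card_univ, Fintype.card_fin, nsmul_eq_mul] at hsum
  have hI0 : 0 ≤ ∫ x, M ‖gradient u x‖ ∂(measOf Ω φ) :=
    integral_nonneg fun x => hpos _ (norm_nonneg _)
  have hJ0 : 0 ≤ ∫ x, P (θ * hessNormHS u x) ∂(measOf Ω φ) :=
    integral_nonneg fun x => hP _ (mul_nonneg hθ.le (hess_nonneg u x))
  have hT0 : 0 ≤ ∫ x, Q (B / θ * |u x|) ∂(measOf Ω φ) :=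
    integral_nonneg fun x => hQ _ (by positivity)
  generalize ∫ x, M ‖gradient u x‖ ∂(measOf Ω φ) = I at *
  generalize ∫ x, P (θ * hessNormHS u x) ∂(measOf Ω φ) = J at *
  generalize ∫ x, Q (B / θ * |u x|) ∂(measOf Ω φ) = T at *
  generalize ∑ j, ∫ x, P (‖φ' x‖ * |v j x|) ∂(measOf Ω φ) = S at *
  have h1 : k * I ≤ n * (2 * I + J + n * (K₁ * J + K₂ * I) + 2 * T) :=
    hmain.trans (by gcongr)
  -- `k` is chosen so that `n (2 + n K₂) ≤ k / 2` and `4 n ≤ k`: the `I`-terms are absorbed.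
  have h2 : n * (2 + n * K₂) * I ≤ k / 2 * I := by
    gcongr
    rw [hkdef]; linarith
  have h3 : 4 * n * T ≤ k * T := by
    gcongr
    rw [hkdef]; linarith [show 0 ≤ 2 * n * (2 + n * K₂) by positivity]
  -- `T` enters with the factor `2 n` and the absorption of `k / 2 * I` doubles it.
  have h4 : k * I ≤ 2 * n * (1 + n * K₁) * J + k * T := by nlinarith
  have h5 : I ≤ 2 * (n / k) * (1 + n * K₁) * J + T := by
    refine le_of_mul_le_mul_left (h4.trans (le_of_eq ?_)) hk
    field_simp
  linarith
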